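/- Let n ≥ 6 be an integer and let G be a connected simple graph on n vertices such that the multiplicity of the largest distance Laplacian eigenvalue ∂L_1 of G equals n−3. Then ∂L_1 ≥ max_{v∈V(G)} Tr(v) + 2. Furthermore, if there exists a vertex v_0 with ∂L_1 = Tr(v_0) + 2, then Tr(v_0) = max_{v∈V(G)} Tr(v). -/

import Mathlib

open Matrix

/-- The distance Laplacian matrix of a graph: diagonal entries are the transmissions
`Tr(v) = ∑ u, d(v,u)`, off-diagonal entries are `-d(u,v)`. -/
noncomputable def distLaplacian {V : Type*} [Fintype V] [DecidableEq V]
    (G : SimpleGraph V) : Matrix V V ℝ :=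
  Matrix.of fun i j => if i = j then ∑ k : V, (G.dist i k : ℝ) else -(G.dist i j : ℝ)

/-- The multiplicity of `μ` as an eigenvalue of `M`, i.e. the dimension of the
corresponding eigenspace. -/
noncomputable def eigMult {V : Type*} [Fintype V] (M : Matrix V V ℝ) (μ : ℝ) : ℕ :=
  Module.finrank ℝ (Module.End.eigenspace M.mulVecLin μ)

/-- The largest eigenvalue of a matrix. -/
noncomputable def lambdaMax {V : Type*} [Fintype V] (M : Matrix V V ℝ) : ℝ :=
  sSup {μ : ℝ | Module.End.HasEigenvalue M.mulVecLin μ}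

/-- The transmission of a vertex. -/
noncomputable def transmission {V : Type*} [Fintype V] (G : SimpleGraph V) (v : V) : ℕ :=
  ∑ u : V, G.dist v u

/-!
Write `λ` for the largest eigenvalue and `T` for the largest transmission. Since the rows of the
distance Laplacian sum to zero, the Rayleigh quotient of `n e_v - 1` gives `n Tr(v) ≤ (n - 1) λ`.
A graph that is not complete has a vertex with a non-neighbour, hence `T ≥ n` and `λ > T + 1`.
On the other hand, a conjugate of `λ` would have the same multiplicity in the integer characteristic
polynomial, which also has the root `0`; a multiplicity of at least `n / 2` leaves no room for this,
so `λ` is an integer and therefore at least `T + 2`. A complete graph is excluded because its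
eigenvalue multiplicities are `n - 1` and `1`.
-/

section Polynomial

open Polynomial

lemma minpoly_pow_rootMultiplicity_dvd {K L : Type*} [Field K] [Field L] [Algebra K L] {x : L}
    (hx : IsSeparable K x) {f : K[X]} (hf : f ≠ 0) :
    minpoly K x ^ (f.map (algebraMap K L)).rootMultiplicity x ∣ f := by
  have hirr : Irreducible (minpoly K x) := minpoly.irreducible hx.isIntegral
  obtain ⟨g, hfg, hg⟩ :=
    (FiniteMultiplicity.of_not_isUnit hirr.not_isUnit hf).exists_eq_pow_mul_and_not_dvd
  set k := multiplicity (minpoly K x) f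
  have hsimple : ((minpoly K x).map (algebraMap K L)).rootMultiplicity x ≤ 1 :=
    rootMultiplicity_le_one_of_separable (Separable.map hx) x
  have hg_root : (g.map (algebraMap K L)).rootMultiplicity x = 0 :=
    rootMultiplicity_eq_zero fun h =>
      hg <| minpoly.dvd K x <| by rwa [IsRoot, eval_map_algebraMap] at h
  have hmap : (f.map (algebraMap K L)).rootMultiplicity x =
      k * ((minpoly K x).map (algebraMap K L)).rootMultiplicity x := by
    classical
    have hne : f.map (algebraMap K L) ≠ 0 := map_ne_zero hf
    rw [hfg, Polynomial.map_mul, Polynomial.map_pow] at hne ⊢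
    rw [rootMultiplicity_mul hne, hg_root, ← count_roots, roots_pow, Multiset.count_nsmul,
      count_roots, add_zero]
  calc minpoly K x ^ (f.map (algebraMap K L)).rootMultiplicity x
      ∣ minpoly K x ^ k := pow_dvd_pow _ (hmap.trans_le (mul_le_of_le_one_right' hsimple))
    _ ∣ f := Dvd.intro g hfg.symm

lemma mem_range_algebraMap_of_natDegree_lt_two_mul_rootMultiplicity {R : Type*} (K : Type*)
    {L : Type*} [CommRing R] [IsIntegrallyClosed R] [Field K] [PerfectField K] [Field L]
    [Algebra R K] [IsFractionRing R K] [Algebra R L] [Algebra K L] [IsScalarTower R K L] {x : L}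
    {f : R[X]} (hf : f.Monic)
    (hdeg : f.natDegree < 2 * (f.map (algebraMap R L)).rootMultiplicity x) :
    x ∈ Set.range (algebraMap R L) := by
  set m := (f.map (algebraMap R L)).rootMultiplicity x with hm
  have hroot : (f.map (algebraMap R L)).IsRoot x :=
    (rootMultiplicity_pos'.1 (show 0 < m by omega)).2
  have hint : IsIntegral R x := ⟨f, hf, by rwa [← eval_map]⟩
  have hx : IsSeparable K x :=
    PerfectField.separable_of_irreducible (minpoly.irreducible hint.tower_top)
  have hdvd : minpoly K x ^ m ∣ f.map (algebraMap R K) := by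
    rw [hm, IsScalarTower.algebraMap_eq R K L, ← Polynomial.map_map]
    exact minpoly_pow_rootMultiplicity_dvd hx (hf.map _).ne_zero
  have hle : m * (minpoly K x).natDegree ≤ f.natDegree := by
    rw [← natDegree_pow, ← hf.natDegree_map (algebraMap R K)]
    exact natDegree_le_of_dvd hdvd (hf.map _).ne_zero
  have hlt : (minpoly K x).natDegree < 2 :=
    lt_of_mul_lt_mul_left (by omega : m * (minpoly K x).natDegree < m * 2) m.zero_le
  have hpos : 0 < (minpoly K x).natDegree := minpoly.natDegree_pos hx.isIntegral
  obtain ⟨y, rfl⟩ := minpoly.natDegree_eq_one_iff.1 (by omega : (minpoly K x).natDegree = 1)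
  obtain ⟨r, rfl⟩ := IsIntegrallyClosed.isIntegral_iff.1
    ((isIntegral_algebraMap_iff (algebraMap K L).injective).1 hint)
  exact ⟨r, IsScalarTower.algebraMap_apply R K L r⟩

end Polynomial

section Matrix

variable {V : Type*} [Fintype V]

lemma eigMult_add_eigMult_le_card (M : Matrix V V ℝ) {μ ν : ℝ} (h : μ ≠ ν) :
    eigMult M μ + eigMult M ν ≤ Fintype.card V := by
  have hdisj : Disjoint (Module.End.eigenspace M.mulVecLin μ)
      (Module.End.eigenspace M.mulVecLin ν) :=
    (Module.End.eigenspaces_iSupIndep M.mulVecLin).pairwiseDisjoint h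
  simpa [eigMult] using Submodule.finrank_add_finrank_le_of_disjoint hdisj

lemma le_lambdaMax {M : Matrix V V ℝ} {μ : ℝ} (h : Module.End.HasEigenvalue M.mulVecLin μ) :
    μ ≤ lambdaMax M :=
  le_csSup (Module.End.finite_hasEigenvalue M.mulVecLin).bddAbove h

lemma posSemidef_lambdaMax_smul_one_sub [DecidableEq V] {M : Matrix V V ℝ} (hM : M.IsHermitian) :
    (lambdaMax M • 1 - M).PosSemidef := by
  rw [posSemidef_iff_isHermitian_and_spectrum_nonneg]
  refine ⟨(isHermitian_one.smul (.all _)).sub hM, ?_⟩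
  rw [← Algebra.algebraMap_eq_smul_one, ← spectrum.singleton_sub_eq]
  rintro _ ⟨_, rfl, μ, hμ, rfl⟩
  rw [← spectrum_toLin', ← Module.End.hasEigenvalue_iff_mem_spectrum] at hμ
  exact sub_nonneg.2 (le_lambdaMax hμ)

lemma dotProduct_mulVec_le_lambdaMax_mul {M : Matrix V V ℝ} (hM : M.IsHermitian) (x : V → ℝ) :
    x ⬝ᵥ M *ᵥ x ≤ lambdaMax M * (x ⬝ᵥ x) := by
  classical
  have h := (posSemidef_lambdaMax_smul_one_sub hM).dotProduct_mulVec_nonneg x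
  rwa [sub_mulVec, smul_mulVec, one_mulVec, dotProduct_sub, dotProduct_smul, star_trivial,
    smul_eq_mul, sub_nonneg] at h

lemma card_mul_diag_le_card_sub_one_mul_lambdaMax {M : Matrix V V ℝ} (hM : M.IsHermitian)
    (hone : M *ᵥ 1 = 0) (v : V) :
    (Fintype.card V : ℝ) * M v v ≤ (Fintype.card V - 1) * lambdaMax M := by
  classical
  set c := (Fintype.card V : ℝ) with hc
  set x : V → ℝ := c • Pi.single v 1 - 1 with hx
  have hMx : M *ᵥ x = c • M.col v := by
    rw [hx, mulVec_sub, mulVec_smul, mulVec_single_one, hone, sub_zero]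
  have hone_col : (1 : V → ℝ) ⬝ᵥ M.col v = 0 := by
    have hsymm : M.col v = M.row v := by
      ext u
      exact hM.apply v u
    rw [hsymm, dotProduct_comm]
    exact congrFun hone v
  have hquad : x ⬝ᵥ M *ᵥ x = c * (c * M v v) := by
    rw [hMx, dotProduct_smul, hx, sub_dotProduct, smul_dotProduct, single_one_dotProduct,
      hone_col, sub_zero, smul_eq_mul, smul_eq_mul, col_apply]
  have hnorm : x ⬝ᵥ x = c * (c - 1) := by
    simp [hx, hc, sub_dotProduct, dotProduct_sub]
  have hpos : 0 < c := Nat.cast_pos.2 (Fintype.card_pos_iff.2 ⟨v⟩)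
  refine le_of_mul_le_mul_left ?_ hpos
  calc c * (c * M v v) = x ⬝ᵥ M *ᵥ x := hquad.symm
    _ ≤ lambdaMax M * (x ⬝ᵥ x) := dotProduct_mulVec_le_lambdaMax_mul hM x
    _ = c * ((c - 1) * lambdaMax M) := by rw [hnorm]; ring

variable [DecidableEq V]

lemma eigMult_add_rank_sub_smul_one (M : Matrix V V ℝ) (μ : ℝ) :
    eigMult M μ + (M - μ • 1).rank = Fintype.card V := by
  have hker : Module.End.eigenspace M.mulVecLin μ = LinearMap.ker (M - μ • 1).mulVecLin := by
    ext x
    simp [sub_eq_zero]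
  rw [eigMult, hker, add_comm, Matrix.rank, LinearMap.finrank_range_add_finrank_ker,
    Module.finrank_fintype_fun_eq_card]

lemma eigMult_le_rootMultiplicity_charpoly (M : Matrix V V ℝ) (μ : ℝ) :
    eigMult M μ ≤ M.charpoly.rootMultiplicity μ := by
  simpa only [eigMult, charpoly_mulVecLin] using LinearMap.finrank_eigenspace_le M.mulVecLin μ

open Polynomial in
lemma exists_intCast_eq_of_card_le_two_mul_eigMult {M : Matrix V V ℝ}
    (hM : ∀ i j, ∃ m : ℤ, (m : ℝ) = M i j) (hdet : M.det = 0) {μ : ℝ} (hμ : μ ≠ 0)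
    (hmult : Fintype.card V ≤ 2 * eigMult M μ) : ∃ m : ℤ, (m : ℝ) = μ := by
  choose A hA using hM
  obtain rfl : (Matrix.of A).map (algebraMap ℤ ℝ) = M := by ext i j; exact hA i j
  have hcoeff : (Matrix.of A).charpoly.coeff 0 = 0 := by
    rw [← RingHom.mapMatrix_apply, ← RingHom.map_det, det_eq_sign_charpoly_coeff] at hdet
    simpa using hdet
  obtain ⟨f, hf⟩ := X_dvd_iff.2 hcoeff
  have hmonic : f.Monic := monic_X.of_mul_monic_left (hf ▸ charpoly_monic _)
  have hdeg : Fintype.card V = 1 + f.natDegree := by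
    rw [← charpoly_natDegree_eq_dim (Matrix.of A), hf, monic_X.natDegree_mul hmonic, natDegree_X]
  have hroot : ((Matrix.of A).map (algebraMap ℤ ℝ)).charpoly.rootMultiplicity μ =
      (f.map (algebraMap ℤ ℝ)).rootMultiplicity μ := by
    rw [charpoly_map, hf, Polynomial.map_mul, map_X,
      rootMultiplicity_mul (mul_ne_zero X_ne_zero (hmonic.map _).ne_zero),
      rootMultiplicity_eq_zero (by simpa using hμ), zero_add]
  have hle := eigMult_le_rootMultiplicity_charpoly ((Matrix.of A).map (algebraMap ℤ ℝ)) μ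
  exact mem_range_algebraMap_of_natDegree_lt_two_mul_rootMultiplicity ℚ hmonic (by omega)

end Matrix

section Graph

variable {V : Type*} [Fintype V]

lemma card_le_transmission_of_not_adj {G : SimpleGraph V} (hG : G.Connected) {v w : V}
    (hne : v ≠ w) (hadj : ¬ G.Adj v w) : Fintype.card V ≤ transmission G v := by
  classical
  have hdist (u : V) : 1 + (if u = w then 1 else 0) ≤ G.dist v u + if u = v then 1 else 0 := by
    have hpos : u ≠ v → 0 < G.dist v u := fun h => hG.pos_dist_of_ne h.symm
    have hdist_ne : G.dist v w ≠ 1 := fun h => hadj (SimpleGraph.dist_eq_one_iff_adj.1 h)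
    have htwo : 2 ≤ G.dist v w := by
      have := hG.pos_dist_of_ne hne
      omega
    grind
  have hsum := Finset.sum_le_sum fun u (_ : u ∈ Finset.univ) => hdist u
  simpa [Finset.sum_add_distrib, transmission] using hsum

variable [DecidableEq V]

lemma isHermitian_distLaplacian (G : SimpleGraph V) : (distLaplacian G).IsHermitian := by
  ext i j
  obtain rfl | hij := eq_or_ne i j
  · simp
  · simp [distLaplacian, hij, hij.symm, SimpleGraph.dist_comm]

lemma distLaplacian_apply_self (G : SimpleGraph V) (v : V) :
    distLaplacian G v v = transmission G v := by
  simp [distLaplacian, transmission]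

lemma distLaplacian_eq_diagonal_sub (G : SimpleGraph V) :
    distLaplacian G =
      diagonal (fun v => (transmission G v : ℝ)) - Matrix.of fun u v => (G.dist u v : ℝ) := by
  ext u v
  obtain rfl | h := eq_or_ne u v <;> simp [distLaplacian, transmission, *]

lemma exists_intCast_eq_distLaplacian_apply (G : SimpleGraph V) (u v : V) :
    ∃ m : ℤ, (m : ℝ) = distLaplacian G u v :=
  ⟨diagonal (fun v => (transmission G v : ℤ)) u v - G.dist u v, by
    simp [distLaplacian_eq_diagonal_sub, diagonal_apply, apply_ite]⟩

lemma distLaplacian_mulVec_one (G : SimpleGraph V) : distLaplacian G *ᵥ 1 = 0 := by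
  ext v
  rw [distLaplacian_eq_diagonal_sub, sub_mulVec, Pi.sub_apply, mulVec_diagonal]
  simp [mulVec, dotProduct, transmission]

lemma det_distLaplacian [Nonempty V] (G : SimpleGraph V) : (distLaplacian G).det = 0 :=
  exists_mulVec_eq_zero_iff.1 ⟨1, one_ne_zero, distLaplacian_mulVec_one G⟩

lemma distLaplacian_top :
    distLaplacian (⊤ : SimpleGraph V) = (Fintype.card V : ℝ) • 1 - vecMulVec 1 1 := by
  ext u v
  obtain rfl | h := eq_or_ne u v
  · have hcard : 1 ≤ Fintype.card V := Fintype.card_pos_iff.2 ⟨u⟩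
    simp [distLaplacian_apply_self, transmission, SimpleGraph.dist_top, Finset.sum_ite,
      Finset.filter_ne, hcard]
  · simp [distLaplacian, SimpleGraph.dist_top, h]

lemma card_le_eigMult_distLaplacian_top_add_one :
    Fintype.card V ≤ eigMult (distLaplacian (⊤ : SimpleGraph V)) (Fintype.card V) + 1 := by
  have hrank : (distLaplacian (⊤ : SimpleGraph V) - (Fintype.card V : ℝ) • 1).rank ≤ 1 := by
    rw [distLaplacian_top, sub_sub_cancel_left, ← neg_vecMulVec]
    exact rank_vecMulVec_le _ _
  have hsum := eigMult_add_rank_sub_smul_one (distLaplacian (⊤ : SimpleGraph V)) (Fintype.card V)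
  omega

lemma ne_top_of_eigMult_distLaplacian {G : SimpleGraph V} {μ : ℝ}
    (hlow : 1 < eigMult (distLaplacian G) μ)
    (hupp : eigMult (distLaplacian G) μ + 1 < Fintype.card V) : G ≠ ⊤ := by
  rintro rfl
  have htop := card_le_eigMult_distLaplacian_top_add_one (V := V)
  obtain rfl | hμ := eq_or_ne μ (Fintype.card V)
  · omega
  · have hsum := eigMult_add_eigMult_le_card (distLaplacian (⊤ : SimpleGraph V)) hμ
    omega

lemma transmission_add_one_lt_lambdaMax {G : SimpleGraph V} {v : V}
    (hv : Fintype.card V ≤ transmission G v) :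
    (transmission G v : ℝ) + 1 < lambdaMax (distLaplacian G) := by
  have hdiag := card_mul_diag_le_card_sub_one_mul_lambdaMax (isHermitian_distLaplacian G)
    (distLaplacian_mulVec_one G) v
  rw [distLaplacian_apply_self] at hdiag
  have hcard : (1 : ℝ) ≤ Fintype.card V := Nat.one_le_cast.2 (Fintype.card_pos_iff.2 ⟨v⟩)
  have hv' : (Fintype.card V : ℝ) ≤ transmission G v := Nat.cast_le.2 hv
  by_contra! hle
  have hmul := mul_le_mul_of_nonneg_left hle (sub_nonneg.2 hcard)
  linarith

end Graph

theorem largest_distLaplacian_eigenvalue_ge_maxTrans_add_two_general {V : Type*} [Fintype V]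
    [DecidableEq V] (G : SimpleGraph V) (hG : G.Connected) (hne : G ≠ ⊤)
    (hmult : Fintype.card V ≤ 2 * eigMult (distLaplacian G) (lambdaMax (distLaplacian G))) :
    ((Finset.univ.sup (transmission G) : ℕ) : ℝ) + 2 ≤ lambdaMax (distLaplacian G) ∧
      ∀ v₀ : V, lambdaMax (distLaplacian G) = (transmission G v₀ : ℝ) + 2 →
        transmission G v₀ = Finset.univ.sup (transmission G) := by
  have : Nonempty V := hG.nonempty
  obtain ⟨v, w, hvw, hadj⟩ := SimpleGraph.ne_top_iff_exists_not_adj.1 hne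
  obtain ⟨u, -, hu⟩ :=
    Finset.exists_mem_eq_sup Finset.univ Finset.univ_nonempty (transmission G)
  have hmax (v : V) : transmission G v ≤ transmission G u :=
    hu ▸ Finset.le_sup (Finset.mem_univ v)
  have hlt := transmission_add_one_lt_lambdaMax
    ((card_le_transmission_of_not_adj hG hvw hadj).trans (hmax v))
  have hpos : 0 < lambdaMax (distLaplacian G) := hlt.trans' (by positivity)
  obtain ⟨m, hm⟩ := exists_intCast_eq_of_card_le_two_mul_eigMult
    (exists_intCast_eq_distLaplacian_apply G) (det_distLaplacian G) hpos.ne' hmult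
  rw [← hm] at hlt
  rw [hu, ← hm]
  norm_cast at hlt ⊢
  exact ⟨by omega, fun v₀ hv₀ => (hmax v₀).antisymm (by omega)⟩

/-- If `G` is a connected graph on `n ≥ 6` vertices whose largest distance
Laplacian eigenvalue `∂ᴸ₁` has multiplicity `n - 3`, then `∂ᴸ₁ ≥ max_v Tr(v) + 2`;
moreover, if `∂ᴸ₁ = Tr(v₀) + 2` for some vertex `v₀`, then `Tr(v₀) = max_v Tr(v)`. -/
theorem largest_distLaplacian_eigenvalue_ge_maxTrans_add_two
    (n : ℕ) (hn : 6 ≤ n) (G : SimpleGraph (Fin n)) (hG : G.Connected)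
    (hmult : eigMult (distLaplacian G) (lambdaMax (distLaplacian G)) = n - 3) :
    ((Finset.univ.sup (transmission G) : ℕ) : ℝ) + 2 ≤ lambdaMax (distLaplacian G) ∧
      ∀ v₀ : Fin n, lambdaMax (distLaplacian G) = (transmission G v₀ : ℝ) + 2 →
        transmission G v₀ = Finset.univ.sup (transmission G) := by
  have hne : G ≠ ⊤ := ne_top_of_eigMult_distLaplacian (μ := lambdaMax (distLaplacian G))
    (by omega) (by rw [Fintype.card_fin]; omega)
  exact largest_distLaplacian_eigenvalue_ge_maxTrans_add_two_general G hG hne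
    (by rw [Fintype.card_fin]; omega)
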